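/- arXiv:2310.04819 — 2 statements merged into one kernel-verified Lean document; each statement's English description precedes it below -/
import Mathlib

section
/- Fix θ ∈ ℝ. With U(θ), V_CNOT, L_s(θ) = (U(θ)·V_CNOT + V_CNOT·U(θ))/2 and ρ = (1/3)·diag(1,1,1,0) as above, the partial transpose (with respect to the second qubit) of the normalized output state ρ_f = L_s(θ) ρ L_s(θ)† / Tr(L_s(θ) ρ L_s(θ)†) is positive semidefinite; that is, ρ_f is a PPT state, and hence (being a two-qubit state) separable. -/
/-!
The partial transpose of the unnormalized output is `1/3` times a Gram matrix `Kᴴ * K`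
(`ptB_output_eq`): its quadratic form is an explicit sum of five squares, so it is positive
semidefinite. Since the partial transpose preserves the trace (`trace_ptB`), the normalizing factor
is the inverse of the trace of a positive semidefinite matrix, hence nonnegative, and scaling by it
preserves positivity.
-/

open Matrix
open scoped ComplexOrder

/-- The global unitary `U(θ)` of Eq. (7). -/
noncomputable def Uθ (θ : ℝ) : Matrix (Fin 4) (Fin 4) ℂ :=
  !![(Real.cos θ : ℂ), 0, 0, (Real.sin θ : ℂ);
     0, (Real.cos θ : ℂ), (Real.sin θ : ℂ), 0;
     0, (Real.sin θ : ℂ), -(Real.cos θ : ℂ), 0;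
     (Real.sin θ : ℂ), 0, 0, -(Real.cos θ : ℂ)]

/-- The CNOT gate. -/
noncomputable def Vcnot : Matrix (Fin 4) (Fin 4) ℂ :=
  !![1, 0, 0, 0; 0, 1, 0, 0; 0, 0, 0, 1; 0, 0, 1, 0]

/-- The switch operator `L_s(θ) = (U(θ)·CNOT + CNOT·U(θ))/2`. -/
noncomputable def Lsθ (θ : ℝ) : Matrix (Fin 4) (Fin 4) ℂ :=
  (1/2 : ℂ) • (Uθ θ * Vcnot + Vcnot * Uθ θ)

/-- The rank-3 boundary absolutely separable state `ρ = (1/3)·diag(1,1,1,0)`. -/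
noncomputable def ρ₃ : Matrix (Fin 4) (Fin 4) ℂ :=
  (1/3 : ℂ) • !![1, 0, 0, 0; 0, 1, 0, 0; 0, 0, 1, 0; 0, 0, 0, 0]

/-- Combine two qubit indices `i, j ∈ {0,1}` into the index `2i+j ∈ {0,…,3}` of `ℂ⁴ ≅ ℂ²⊗ℂ²`. -/
def idx2 (i j : Fin 2) : Fin 4 :=
  ⟨2 * i.val + j.val, by have := i.isLt; have := j.isLt; omega⟩

/-- First-qubit index of a basis index of `ℂ⁴ ≅ ℂ²⊗ℂ²`. -/
def q1 (x : Fin 4) : Fin 2 := ⟨x.val / 2, by have := x.isLt; omega⟩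

/-- Second-qubit index of a basis index of `ℂ⁴ ≅ ℂ²⊗ℂ²`. -/
def q2 (x : Fin 4) : Fin 2 := ⟨x.val % 2, by have := x.isLt; omega⟩

/-- Partial transpose with respect to the second qubit:
`M^{T_B}_{(i,j),(k,l)} = M_{(i,l),(k,j)}`. -/
def ptB (M : Matrix (Fin 4) (Fin 4) ℂ) : Matrix (Fin 4) (Fin 4) ℂ :=
  fun x y => M (idx2 (q1 x) (q2 y)) (idx2 (q1 y) (q2 x))

/-- A Gram factor of the partially transposed output: up to the weight `1/3`, with `c = cos θ` and
`h = sin θ / 2`, its rows are the linear forms in the sum-of-squares decomposition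
`h²(x₂ + x₃)² + (c x₀ + h(x₂ + x₃))² + c² x₃² + c² x₁² + h²(x₀ + x₁)²`. -/
noncomputable def gramFactor (θ : ℝ) : Matrix (Fin 5) (Fin 4) ℂ :=
  !![0, 0, (Real.sin θ / 2 : ℂ), (Real.sin θ / 2 : ℂ);
     (Real.cos θ : ℂ), 0, (Real.sin θ / 2 : ℂ), (Real.sin θ / 2 : ℂ);
     0, 0, 0, (Real.cos θ : ℂ);
     0, (Real.cos θ : ℂ), 0, 0;
     (Real.sin θ / 2 : ℂ), (Real.sin θ / 2 : ℂ), 0, 0]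

theorem Lsθ_eq (θ : ℝ) : Lsθ θ =
    !![(Real.cos θ : ℂ), 0, (Real.sin θ / 2 : ℂ), (Real.sin θ / 2 : ℂ);
       0, (Real.cos θ : ℂ), (Real.sin θ / 2 : ℂ), (Real.sin θ / 2 : ℂ);
       (Real.sin θ / 2 : ℂ), (Real.sin θ / 2 : ℂ), 0, -(Real.cos θ : ℂ);
       (Real.sin θ / 2 : ℂ), (Real.sin θ / 2 : ℂ), -(Real.cos θ : ℂ), 0] := by
  ext i j
  fin_cases i <;> fin_cases j <;>
    simp [Lsθ, Uθ, Vcnot] <;> ring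

theorem ptB_output_eq (θ : ℝ) :
    ptB (Lsθ θ * ρ₃ * (Lsθ θ)ᴴ) = (1/3 : ℂ) • ((gramFactor θ)ᴴ * gramFactor θ) := by
  rw [Lsθ_eq]
  ext i j
  fin_cases i <;> fin_cases j <;>
    simp [ptB, idx2, q1, q2, ρ₃, gramFactor, Matrix.mul_apply, Fin.sum_univ_four,
      Fin.sum_univ_five, -Complex.ofReal_cos, -Complex.ofReal_sin, Complex.conj_ofReal, Complex.conj_ofNat] <;> ring

theorem ptB_smul (a : ℂ) (M : Matrix (Fin 4) (Fin 4) ℂ) : ptB (a • M) = a • ptB M := rfl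

theorem trace_ptB (M : Matrix (Fin 4) (Fin 4) ℂ) : (ptB M).trace = M.trace := by
  simp [Matrix.trace, Fin.sum_univ_four, ptB, idx2, q1, q2]

/-- The normalized switch output on the rank-3 boundary state is a PPT state: its partial
transpose with respect to the second qubit is positive semidefinite, hence (being a two-qubit
state) it is separable. -/
theorem switch_output_rank3_is_PPT (θ : ℝ) :
    (ptB ((Lsθ θ * ρ₃ * (Lsθ θ)ᴴ).trace⁻¹ • (Lsθ θ * ρ₃ * (Lsθ θ)ᴴ))).PosSemidef := by
  have h : (ptB (Lsθ θ * ρ₃ * (Lsθ θ)ᴴ)).PosSemidef := by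
    rw [ptB_output_eq]
    refine (Matrix.posSemidef_conjTranspose_mul_self _).smul ?_
    positivity
  rw [ptB_smul, ← trace_ptB]
  exact h.smul (inv_nonneg.mpr h.trace_nonneg)
end

section
/- Let p ∈ [0,1], γ, φ ∈ ℝ, |ξ⟩ = cos γ |00⟩ + e^{iφ} sin γ |11⟩, and ρ_W = p |ξ⟩⟨ξ| + ((1−p)/4)·1₄. Let L_s = (U(π/2)·V_CNOT + V_CNOT·U(π/2))/2, where U(π/2) is the 4×4 antidiagonal matrix with all antidiagonal entries 1 (i.e. X⊗X) and V_CNOT is the permutation matrix with rows (1,0,0,0),(0,1,0,0),(0,0,0,1),(0,0,1,0). Then Tr(L_s ρ_W L_s†) = 1/2, and the eigenvalues of ρ_f = L_s ρ_W L_s† / Tr(L_s ρ_W L_s†), in nonincreasing order, are (1+p)/2, (1−p)/2, 0, 0, independently of γ and φ. Consequently λ₁ − λ₃ − 2√(λ₂ λ₄) = (1+p)/2 > 0, so ρ_f violates the absolute-separability eigenvalue condition for every p ∈ [0,1]. -/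
/-!
`Lshalfπ = !![0, 1; 1, 0] ⊗ J / 2` with `J` the all-ones `2 × 2` matrix, so every output state has
the form `M ⊗ J` with `M` of size `2 × 2` (`output_eq`). Its spectrum is `0, 0` together with twice
the spectrum of `M` (`charpoly_blockOnes`). The outcome probability is `1/2`, so the normalized
output is `(2 M) ⊗ J` with spectrum `0, 0` and that of `4 M`, which has trace `1` and determinant
`(1 - p²) / 4` because `sin² γ + cos² γ = 1` and the phase has modulus one; its eigenvalues are
therefore `(1 ± p) / 2`, whatever `γ` and `φ` are. The roots of the characteristic polynomial
determine the eigenvalue tuple up to a permutation (`exists_perm_eigenvalues`).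
-/

open Matrix
open scoped ComplexOrder

/-- The pure state `|ξ⟩ = cos γ |00⟩ + e^{iφ} sin γ |11⟩` in `ℂ⁴ ≅ ℂ²⊗ℂ²`. -/
noncomputable def ξvec (γ φ : ℝ) : Fin 4 → ℂ :=
  ![(Real.cos γ : ℂ), 0, 0, Complex.exp (φ * Complex.I) * (Real.sin γ : ℂ)]

/-- The modified Werner state `ρ_W = p |ξ⟩⟨ξ| + ((1−p)/4)·1₄`. -/
noncomputable def ρW (p γ φ : ℝ) : Matrix (Fin 4) (Fin 4) ℂ :=
  (p : ℂ) • Matrix.vecMulVec (ξvec γ φ) (star (ξvec γ φ)) + (((1 - p)/4 : ℝ) : ℂ) • 1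

/-- `U(π/2)`: the 4×4 antidiagonal matrix with all antidiagonal entries 1 (i.e. `X ⊗ X`). -/
noncomputable def Uhalfπ : Matrix (Fin 4) (Fin 4) ℂ :=
  !![0, 0, 0, 1; 0, 0, 1, 0; 0, 1, 0, 0; 1, 0, 0, 0]

/-- The switch operator `L_s = (U(π/2)·CNOT + CNOT·U(π/2))/2`. -/
noncomputable def Lshalfπ : Matrix (Fin 4) (Fin 4) ℂ :=
  (1/2 : ℂ) • (Uhalfπ * Vcnot + Vcnot * Uhalfπ)

/-- The characteristic polynomial of `!![a, b; d, c] ⊗ J`, with `J` the all-ones `2 × 2` matrix: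
the kernel of `J` contributes `X ^ 2`, and its other eigenvalue `2` doubles the `2 × 2` factor. -/
lemma charpoly_blockOnes (a b c d : ℂ) :
    (!![a, a, b, b; a, a, b, b; d, d, c, c; d, d, c, c] : Matrix (Fin 4) (Fin 4) ℂ).charpoly =
      Polynomial.X ^ 2 * (Polynomial.X ^ 2 - Polynomial.C (2 * (a + c)) * Polynomial.X
        + Polynomial.C (4 * (a * c - b * d))) := by
  rw [Matrix.charpoly, Matrix.det_succ_row_zero]
  simp [Matrix.det_fin_three, Fin.sum_univ_succ, Matrix.charmatrix_apply, Fin.succAbove,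
    Matrix.diagonal_apply, Polynomial.C_ofNat]
  ring

lemma Lshalfπ_eq :
    Lshalfπ = !![0, 0, 1/2, 1/2; 0, 0, 1/2, 1/2; 1/2, 1/2, 0, 0; 1/2, 1/2, 0, 0] := by
  ext i j
  fin_cases i <;> fin_cases j <;>
    simp [Lshalfπ, Uhalfπ, Vcnot]

lemma exp_mul_conj (φ : ℝ) :
    Complex.exp (φ * Complex.I) * (starRingEnd ℂ) (Complex.exp (φ * Complex.I)) = 1 := by
  rw [Complex.mul_conj, Complex.normSq_eq_norm_sq, Complex.norm_exp_ofReal_mul_I]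
  simp

/-- Tuples with the same multiset of values differ by a permutation: both have the same sorted
rearrangement. -/
lemma exists_perm_of_map_univ_eq {n : ℕ} (f g : Fin n → ℝ)
    (h : Multiset.map f Finset.univ.val = Multiset.map g Finset.univ.val) :
    ∃ σ : Equiv.Perm (Fin n), f ∘ σ = g := by
  have hfg : (List.ofFn f).Perm (List.ofFn g) := by
    rw [Fin.univ_val_map, Fin.univ_val_map] at h
    exact Multiset.coe_eq_coe.mp h
  have hs : f ∘ Tuple.sort f = g ∘ Tuple.sort g :=
    List.ofFn_injective <| List.Perm.eq_of_sortedLE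
      (Tuple.monotone_sort f).sortedLE_ofFn (Tuple.monotone_sort g).sortedLE_ofFn
      (((Tuple.sort f).ofFn_comp_perm f).trans (hfg.trans ((Tuple.sort g).ofFn_comp_perm g).symm))
  refine ⟨(Tuple.sort g).symm.trans (Tuple.sort f), ?_⟩
  ext i
  simpa using congrFun hs ((Tuple.sort g).symm i)

lemma exists_perm_eigenvalues {n : ℕ} {A : Matrix (Fin n) (Fin n) ℂ} (hA : A.IsHermitian)
    (v : Fin n → ℝ) (h : A.charpoly = ∏ i, (Polynomial.X - Polynomial.C (v i : ℂ))) :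
    ∃ σ : Equiv.Perm (Fin n), hA.eigenvalues ∘ σ = v := by
  apply exists_perm_of_map_univ_eq
  apply Multiset.map_injective Complex.ofReal_injective
  have hr := hA.roots_charpoly_eq_eigenvalues
  have hv : (∏ i, (Polynomial.X - Polynomial.C (v i : ℂ))).roots =
      Multiset.map (fun i => (v i : ℂ)) Finset.univ.val := by
    rw [Polynomial.roots_prod _ _
      (Finset.prod_ne_zero_iff.mpr fun i _ => Polynomial.X_sub_C_ne_zero _)]
    simp
  rw [h, hv] at hr
  rw [Multiset.map_map, Multiset.map_map]
  exact hr.symm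

lemma ρW_eq (p γ φ : ℝ) :
    ρW p γ φ = (let e := Complex.exp (φ * Complex.I)
      let s : ℂ := Real.sin γ
      let c : ℂ := Real.cos γ
      let q : ℂ := (1 - p) / 4
      !![p * c ^ 2 + q, 0, 0, p * (starRingEnd ℂ) e * s * c; 0, q, 0, 0; 0, 0, q, 0;
        p * e * s * c, 0, 0, p * s ^ 2 + q]) := by
  have he := exp_mul_conj φ
  generalize hE : Complex.exp (φ * Complex.I) = e at *
  ext i j
  simp only [ρW, Matrix.add_apply, Matrix.smul_apply, Matrix.vecMulVec_apply, Pi.star_apply]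
  fin_cases i <;> fin_cases j <;>
    simp [ξvec, hE, -Complex.ofReal_sin, -Complex.ofReal_cos, -mul_eq_mul_left_iff]
  · ring
  · ring
  · ring
  · linear_combination ((p : ℂ) * Real.sin γ ^ 2) * he

/-- The unnormalized output, in the form `!![a, b; b̄, c] ⊗ J` with `J` all-ones. -/
lemma output_eq (p γ φ : ℝ) :
    Lshalfπ * ρW p γ φ * Lshalfπᴴ =
      (let e := Complex.exp (φ * Complex.I)
       let a : ℂ := p * Real.sin γ ^ 2 / 4 + (1 - p) / 8
       let c : ℂ := p * Real.cos γ ^ 2 / 4 + (1 - p) / 8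
       let b : ℂ := p * e * Real.sin γ * Real.cos γ / 4
       let d : ℂ := p * (starRingEnd ℂ) e * Real.sin γ * Real.cos γ / 4
       !![a, a, b, b; a, a, b, b; d, d, c, c; d, d, c, c]) := by
  have hL : Lshalfπᴴ = Lshalfπ := by
    rw [Lshalfπ_eq]
    ext i j
    fin_cases i <;> fin_cases j <;> simp
  rw [hL, Lshalfπ_eq, ρW_eq]
  ext i j
  fin_cases i <;> fin_cases j <;>
    simp [Matrix.mul_apply, Fin.sum_univ_four, -Complex.ofReal_sin, -Complex.ofReal_cos] <;>
    ring

lemma isHermitian_ρW (p γ φ : ℝ) : (ρW p γ φ).IsHermitian := by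
  ext i j
  rw [ρW_eq]
  fin_cases i <;> fin_cases j <;> simp [-Complex.ofReal_sin, -Complex.ofReal_cos]

lemma sin_sq_add_cos_sq_ofReal (γ : ℝ) :
    (Real.sin γ : ℂ) ^ 2 + (Real.cos γ : ℂ) ^ 2 = 1 := by
  exact_mod_cast Real.sin_sq_add_cos_sq γ

lemma trace_output (p γ φ : ℝ) : (Lshalfπ * ρW p γ φ * Lshalfπᴴ).trace = 1 / 2 := by
  rw [output_eq]
  simp only [Matrix.trace, Matrix.diag, Fin.sum_univ_four]
  simp [-Complex.ofReal_sin, -Complex.ofReal_cos]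
  linear_combination (p / 2 : ℂ) * sin_sq_add_cos_sq_ofReal γ

lemma charpoly_normalized_output (p γ φ : ℝ) :
    ((2 : ℂ) • (Lshalfπ * ρW p γ φ * Lshalfπᴴ)).charpoly =
      ∏ i, (Polynomial.X - Polynomial.C ((![(1 + p)/2, (1 - p)/2, 0, 0] : Fin 4 → ℝ) i : ℂ)) := by
  rw [output_eq]
  have hsc := sin_sq_add_cos_sq_ofReal γ
  have he := exp_mul_conj φ
  generalize Complex.exp (φ * Complex.I) = e at *
  generalize (Real.sin γ : ℂ) = s at *
  generalize (Real.cos γ : ℂ) = c at *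
  simp only [Matrix.smul_of, Matrix.smul_cons, Matrix.smul_empty, smul_eq_mul]
  rw [charpoly_blockOnes]
  -- The two elementary symmetric functions of the nonzero eigenvalues.
  have h1 : 2 * (2 * (p * s ^ 2 / 4 + (1 - p) / 8) + 2 * (p * c ^ 2 / 4 + (1 - p) / 8))
      = (1 + p : ℂ) / 2 + (1 - p) / 2 := by
    linear_combination (p : ℂ) * hsc
  have h2 : 4 * (2 * (p * s ^ 2 / 4 + (1 - p) / 8) * (2 * (p * c ^ 2 / 4 + (1 - p) / 8))
      - 2 * (p * e * s * c / 4) * (2 * (p * (starRingEnd ℂ) e * s * c / 4)))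
      = (1 + p : ℂ) / 2 * ((1 - p) / 2) := by
    linear_combination (p * (1 - p) / 2 : ℂ) * hsc - (p ^ 2 * s ^ 2 * c ^ 2 : ℂ) * he
  rw [h1, h2, Fin.prod_univ_four]
  simp only [Matrix.cons_val, Complex.ofReal_div, Complex.ofReal_add, Complex.ofReal_sub,
    Complex.ofReal_one, Complex.ofReal_ofNat, Complex.ofReal_zero, map_zero, map_add, map_mul]
  ring

/-- Switching CNOT with `U(π/2)` on the modified Werner state: the outcome probability is `1/2`,
the normalized output has eigenvalues `(1+p)/2, (1−p)/2, 0, 0` in nonincreasing order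
(independently of `γ, φ`), and the absolute-separability condition is violated since
`λ₁ − λ₃ − 2√(λ₂λ₄) = (1+p)/2 > 0` for every `p ∈ [0,1]`. -/
theorem switch_breaks_AS_modified_werner (p γ φ : ℝ) (hp0 : 0 ≤ p) (hp1 : p ≤ 1) :
    (Lshalfπ * ρW p γ φ * Lshalfπᴴ).trace = 1/2 ∧
    (∃ (hf : ((Lshalfπ * ρW p γ φ * Lshalfπᴴ).trace⁻¹ •
          (Lshalfπ * ρW p γ φ * Lshalfπᴴ)).IsHermitian)
        (σ : Equiv.Perm (Fin 4)),
      hf.eigenvalues ∘ σ = ![(1 + p)/2, (1 - p)/2, 0, 0]) ∧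
    (1 + p)/2 - 0 - 2 * Real.sqrt ((1 - p)/2 * 0) = (1 + p)/2 ∧
    0 < (1 + p)/2 := by
  have ht := trace_output p γ φ
  have hf : ((Lshalfπ * ρW p γ φ * Lshalfπᴴ).trace⁻¹ •
      (Lshalfπ * ρW p γ φ * Lshalfπᴴ)).IsHermitian := by
    rw [ht]
    refine IsSelfAdjoint.smul ?_ (isHermitian_mul_mul_conjTranspose _ (isHermitian_ρW p γ φ))
    simp
  refine ⟨ht, ⟨hf, exists_perm_eigenvalues hf _ ?_⟩, by simp, by linarith⟩
  rw [ht, show ((1 / 2 : ℂ))⁻¹ = 2 by norm_num]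
  exact charpoly_normalized_output p γ φ
end
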